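/- Let N ≥ 1 and let u, v : ℝ^N → ℝ be of class C². Then (u, v) is a classical solution of the system (P_Λ) with Λ = 3 satisfying u > 0 and v > 0 at every point of ℝ^N if and only if there exists a function w : ℝ^N → ℝ of class C² solving the Allen–Cahn equation −Δw = w − w³ pointwise on ℝ^N, with −1 < w(x) < 1 for every x ∈ ℝ^N, such that u = (1 + w)/2 and v = (1 − w)/2 = 1 − u on ℝ^N. -/

import Mathlib

open scoped RealInnerProductSpace
open Filter

noncomputable section

/-- The Laplacian of `f : ℝ^N → ℝ`, as the sum of the pure second partial
derivatives in the coordinate directions. -/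
def lap (N : ℕ) (f : EuclideanSpace ℝ (Fin N) → ℝ) (x : EuclideanSpace ℝ (Fin N)) : ℝ :=
  ∑ i : Fin N,
    fderiv ℝ (fun y => fderiv ℝ f y (EuclideanSpace.single i 1)) x (EuclideanSpace.single i 1)

/-- `(u, v)` is a classical solution of the system `(P_Λ)` on `ℝ^N`:
`u, v` are `C²` and `-Δu = u - u³ - Λ u v²`, `-Δv = v - v³ - Λ u² v` pointwise. -/
def IsSolution (N : ℕ) (Λ : ℝ) (u v : EuclideanSpace ℝ (Fin N) → ℝ) : Prop :=
  ContDiff ℝ 2 u ∧ ContDiff ℝ 2 v ∧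
  (∀ x, -lap N u x = u x - (u x) ^ 3 - Λ * u x * (v x) ^ 2) ∧
  (∀ x, -lap N v x = v x - (v x) ^ 3 - Λ * (u x) ^ 2 * v x)

/-- Condition `(h∞)`: `u → 1`, `v → 0` as `x_N → +∞` and `u → 0`, `v → 1` as
`x_N → -∞`, uniformly with respect to `x' ∈ ℝ^{N-1}` (the dimension is `N + 1`). -/
def Hinf (N : ℕ) (u v : EuclideanSpace ℝ (Fin (N + 1)) → ℝ) : Prop :=
  (∀ ε : ℝ, 0 < ε → ∃ M : ℝ, ∀ x : EuclideanSpace ℝ (Fin (N + 1)),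
    M ≤ x (Fin.last N) → |u x - 1| < ε ∧ |v x| < ε) ∧
  (∀ ε : ℝ, 0 < ε → ∃ M : ℝ, ∀ x : EuclideanSpace ℝ (Fin (N + 1)),
    x (Fin.last N) ≤ M → |u x| < ε ∧ |v x - 1| < ε)

/-!
For `Λ = 3` the system decouples: since `(u ± v)³ = u³ ± 3u²v + 3uv² ± v³`, the pair `(u, v)` solves
it iff `u + v` and `u - v` both solve the Allen–Cahn equation. Everything then rests on a Liouville
theorem: a positive entire solution `s` of the Allen–Cahn equation is identically `1`.

Both bounds of the Liouville theorem are interior estimates on a ball of radius `R` about `x₀`,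
obtained by comparison, in the spirit of Keller and Osserman, with functions of
`ρ(x) = R² - ‖x - x₀‖²`. At a maximum point of `ρ s` the function `s` is touched from above by a
multiple of `1 / ρ`, and comparing Laplacians there gives `R² (s(x₀)² - 1) ≤ 8 + 2n`. At a maximum
point of `ρ² / s` it is touched from below by a multiple of `ρ²`, which gives
`2 R² (1 - s(x₀)²) ≤ (n + 2)²`. No a priori bound on `s` enters, and `R → ∞` concludes.
-/

open scoped Gradient Laplacian Topology
open InnerProductSpace Metric Module

section SecondDerivative

variable {𝕜 E F : Type*} [NontriviallyNormedField 𝕜] [NormedAddCommGroup E] [NormedSpace 𝕜 E]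
  [NormedAddCommGroup F] [NormedSpace 𝕜 F]

lemma iteratedFDeriv_two_eq_iteratedDeriv_comp_line {f : E → F} {x : E} (hf : ContDiffAt 𝕜 2 f x)
    (e : E) : iteratedFDeriv 𝕜 2 f x ![e, e] = iteratedDeriv 2 (f ∘ fun t : 𝕜 => x + t • e) 0 := by
  have hline : deriv (fun t : 𝕜 => x + t • e) = fun _ => e := by
    funext t
    simpa using (((hasDerivAt_id t).smul_const e).const_add x).deriv
  have hx : x + (0 : 𝕜) • e = x := by simp
  rw [iteratedDeriv_vcomp_two (by rwa [hx]) (by fun_prop), iteratedDeriv_succ, iteratedDeriv_one,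
    hline, hx]
  simp [iteratedFDeriv_two_apply]

lemma iteratedDeriv_two_nonpos_of_isLocalMax {f : ℝ → ℝ} {a : ℝ} (hmax : IsLocalMax f a)
    (hf : ContinuousAt f a) : iteratedDeriv 2 f a ≤ 0 := by
  rw [iteratedDeriv_succ, iteratedDeriv_one]
  by_contra! hpos
  -- Otherwise `a` is also a local minimum, so `f` is locally constant.
  have hmin : IsLocalMin f a := isLocalMin_of_deriv_deriv_pos hpos hmax.deriv_eq_zero hf
  have hconst : f =ᶠ[𝓝 a] fun _ => f a := by
    filter_upwards [hmax, hmin] with t hle hge using le_antisymm hle hge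
  simp [hconst.deriv.deriv_eq] at hpos

end SecondDerivative

section Laplacian

variable {E : Type*} [NormedAddCommGroup E] [InnerProductSpace ℝ E] [FiniteDimensional ℝ E]
  {f g : E → ℝ} {x : E}

lemma laplacian_nonpos_of_isLocalMax (hf : ContDiffAt ℝ 2 f x) (hmax : IsLocalMax f x) :
    Δ f x ≤ 0 := by
  rw [laplacian_eq_iteratedFDeriv_stdOrthonormalBasis]
  refine Finset.sum_nonpos fun i _ => ?_
  set e := stdOrthonormalBasis ℝ E i
  have hline : ContinuousAt (fun t : ℝ => x + t • e) 0 := by fun_prop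
  have hx : x + (0 : ℝ) • e = x := by simp
  have hmax₀ : IsLocalMax f (x + (0 : ℝ) • e) := by rwa [hx]
  have hmax_line : IsLocalMax (f ∘ fun t : ℝ => x + t • e) 0 :=
    IsMaxFilter.comp_tendsto (g := fun t : ℝ => x + t • e) hmax₀ hline
  rw [iteratedFDeriv_two_eq_iteratedDeriv_comp_line hf]
  exact iteratedDeriv_two_nonpos_of_isLocalMax hmax_line
    (ContinuousAt.comp (by rw [hx]; exact hf.continuousAt) hline)

lemma laplacian_le_of_eventuallyLE (hf : ContDiffAt ℝ 2 f x) (hg : ContDiffAt ℝ 2 g x)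
    (hle : f ≤ᶠ[𝓝 x] g) (heq : f x = g x) : Δ f x ≤ Δ g x := by
  have hmax : IsLocalMax (f - g) x := by
    filter_upwards [hle] with y hy
    simpa [heq] using hy
  rw [← sub_nonpos, ← hf.laplacian_sub hg]
  exact laplacian_nonpos_of_isLocalMax (hf.sub hg) hmax

lemma laplacian_comp {φ : ℝ → ℝ} (hφ : ContDiffAt ℝ 2 φ (f x)) (hf : ContDiffAt ℝ 2 f x) :
    Δ (φ ∘ f) x = iteratedDeriv 2 φ (f x) * ‖∇ f x‖ ^ 2 + deriv φ (f x) * Δ f x := by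
  have hline (e : E) : iteratedFDeriv ℝ 2 (φ ∘ f) x ![e, e] =
      iteratedDeriv 2 φ (f x) * ⟪∇ f x, e⟫ ^ 2 +
        deriv φ (f x) * iteratedFDeriv ℝ 2 f x ![e, e] := by
    have hx : x + (0 : ℝ) • e = x := by simp
    have hderiv : deriv (f ∘ fun t : ℝ => x + t • e) 0 = ⟪∇ f x, e⟫ := by
      rw [inner_gradient_left]
      simpa [hx, Function.comp_def] using DifferentiableAt.deriv_comp_add_smul
        (x := x) (y := e) (t := (0 : ℝ)) (by rw [hx]; exact hf.differentiableAt two_ne_zero)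
    rw [iteratedFDeriv_two_eq_iteratedDeriv_comp_line (hφ.comp x hf),
      iteratedFDeriv_two_eq_iteratedDeriv_comp_line hf, Function.comp_assoc,
      iteratedDeriv_comp_two (by simpa using hφ)
        (ContDiffAt.comp 0 (by rwa [hx]) (by fun_prop)), hderiv]
    simp
  simp only [laplacian_eq_iteratedFDeriv_stdOrthonormalBasis, hline, Finset.sum_add_distrib,
    ← Finset.mul_sum, OrthonormalBasis.sum_sq_inner_left]

end Laplacian

/-- The function `R² - ‖x - x₀‖²`, for `R > 0` positive exactly on the ball of radius `R` about
`x₀`. The barriers of the comparison arguments are its powers of exponent `-1` and `2`. -/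
def paraboloid {E : Type*} [SeminormedAddCommGroup E] (x₀ : E) (R : ℝ) (x : E) : ℝ :=
  R ^ 2 - ‖x - x₀‖ ^ 2

namespace paraboloid

section Positivity

variable {E : Type*} [SeminormedAddCommGroup E] {x₀ x : E} {R : ℝ}

lemma center : paraboloid x₀ R x₀ = R ^ 2 := by simp [paraboloid]

lemma continuous : Continuous (paraboloid x₀ R) := by
  unfold paraboloid
  fun_prop

lemma le_sq : paraboloid x₀ R x ≤ R ^ 2 := sub_le_self _ (sq_nonneg _)

lemma pos (hx : x ∈ ball x₀ R) : 0 < paraboloid x₀ R x :=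
  sub_pos.2 (pow_lt_pow_left₀ (mem_ball_iff_norm.1 hx) (norm_nonneg _) two_ne_zero)

lemma eq_zero_of_mem_sphere (hx : x ∈ sphere x₀ R) : paraboloid x₀ R x = 0 := by
  rw [paraboloid, mem_sphere_iff_norm.1 hx, sub_self]

lemma exists_isMaxOn_pow_mul [ProperSpace E] (hR : 0 < R) {k : ℕ} (hk : k ≠ 0) {f : E → ℝ}
    (hf : ContinuousOn f (closedBall x₀ R)) (h₀ : 0 < f x₀) :
    ∃ x₁ ∈ ball x₀ R, IsMaxOn (fun x => paraboloid x₀ R x ^ k * f x) (closedBall x₀ R) x₁ := by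
  refine (isCompact_closedBall x₀ R).exists_isMaxOn_mem_subset (z := x₀)
    (.mul (continuous.pow k).continuousOn hf) (mem_closedBall_self hR.le) fun x hx => ?_
  rw [closedBall_sdiff_ball] at hx
  rw [eq_zero_of_mem_sphere hx, zero_pow hk, zero_mul, center]
  positivity

end Positivity

section Derivatives

variable {E : Type*} [NormedAddCommGroup E] [InnerProductSpace ℝ E] {x₀ x : E} {R : ℝ}

lemma contDiff {n : WithTop ℕ∞} : ContDiff ℝ n (paraboloid x₀ R) :=
  contDiff_const.sub ((contDiff_id.sub contDiff_const).norm_sq ℝ)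

lemma hasFDerivAt (x : E) :
    HasFDerivAt (paraboloid x₀ R) (-(2 • innerSL ℝ (x - x₀))) x := by
  have h := (((hasFDerivAt_id x).sub_const x₀).norm_sq).const_sub (R ^ 2)
  rwa [ContinuousLinearMap.comp_id] at h

lemma hasGradientAt [CompleteSpace E] (x : E) :
    HasGradientAt (paraboloid x₀ R) ((-2 : ℝ) • (x - x₀)) x := by
  have hdual : toDual ℝ E ((-2 : ℝ) • (x - x₀)) = -(2 • innerSL ℝ (x - x₀)) := by
    ext y
    simp [two_mul]
  rw [hasGradientAt_iff_hasFDerivAt, hdual]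
  exact hasFDerivAt x

variable [FiniteDimensional ℝ E]

lemma laplacian_eq : Δ (paraboloid x₀ R) x = -(2 * finrank ℝ E) := by
  have hfderiv : fderiv ℝ (paraboloid x₀ R) = fun x => -(2 • innerSL ℝ (x - x₀)) :=
    funext fun x => (hasFDerivAt x).fderiv
  have hsecond : fderiv ℝ (fderiv ℝ (paraboloid x₀ R)) x = -(2 • innerSL ℝ) := by
    have hinner := (innerSL ℝ).hasFDerivAt.comp x ((hasFDerivAt_id x).sub_const x₀)
    rw [hfderiv]
    exact (hinner.const_smul 2).neg.fderiv
  have hdiag (e : E) : iteratedFDeriv ℝ 2 (paraboloid x₀ R) x ![e, e] = -(2 * ⟪e, e⟫) := by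
    rw [iteratedFDeriv_two_apply, hsecond, two_nsmul, two_mul]
    rfl
  simp [laplacian_eq_iteratedFDeriv_stdOrthonormalBasis, hdiag, mul_comm]

lemma laplacian_comp {φ : ℝ → ℝ} (hφ : ContDiffAt ℝ 2 φ (paraboloid x₀ R x)) :
    Δ (φ ∘ paraboloid x₀ R) x = 4 * ‖x - x₀‖ ^ 2 * iteratedDeriv 2 φ (paraboloid x₀ R x) -
      2 * finrank ℝ E * deriv φ (paraboloid x₀ R x) := by
  rw [_root_.laplacian_comp hφ contDiff.contDiffAt, (hasGradientAt x).gradient, laplacian_eq,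
    norm_smul, mul_pow, Real.norm_eq_abs, sq_abs]
  ring

lemma laplacian_sq : Δ (fun y => paraboloid x₀ R y ^ 2) x =
    8 * ‖x - x₀‖ ^ 2 - 4 * finrank ℝ E * paraboloid x₀ R x := by
  have hfirst (r : ℝ) : deriv (· ^ 2) r = 2 * r := by simp
  have hsecond (r : ℝ) : iteratedDeriv 2 (· ^ 2) r = 2 := by simp
  refine (laplacian_comp (φ := (· ^ 2)) (by fun_prop)).trans ?_
  rw [hfirst, hsecond]
  ring

lemma laplacian_inv (hx : paraboloid x₀ R x ≠ 0) :
    Δ (fun y => (paraboloid x₀ R y)⁻¹) x =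
      8 * ‖x - x₀‖ ^ 2 / paraboloid x₀ R x ^ 3 + 2 * finrank ℝ E / paraboloid x₀ R x ^ 2 := by
  have hsecond (r : ℝ) : iteratedDeriv 2 (·⁻¹) r = 2 / r ^ 3 := by
    rw [iteratedDeriv_eq_iterate, iter_deriv_inv]
    norm_num [zpow_neg, div_eq_mul_inv]
  refine (laplacian_comp (φ := (·⁻¹)) (contDiffAt_inv ℝ hx)).trans ?_
  rw [hsecond, deriv_inv]
  ring

end Derivatives

end paraboloid

section Liouville

variable {E : Type*} [NormedAddCommGroup E] [InnerProductSpace ℝ E] [FiniteDimensional ℝ E]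
  {s : E → ℝ} {x₀ x₁ : E} {R : ℝ}

lemma paraboloid_sq_mul_sq_sub_one_le_of_isLocalMax (hs : ContDiffAt ℝ 2 s x₁)
    (hmax : IsLocalMax (fun x => paraboloid x₀ R x * s x) x₁) (hρ_pos : 0 < paraboloid x₀ R x₁)
    (hs₁ : 0 < s x₁) (hsub : s x₁ ^ 3 - s x₁ ≤ Δ s x₁) :
    paraboloid x₀ R x₁ ^ 2 * (s x₁ ^ 2 - 1) ≤
      8 * ‖x₁ - x₀‖ ^ 2 + 2 * finrank ℝ E * paraboloid x₀ R x₁ := by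
  set n : ℝ := (finrank ℝ E : ℝ)
  set ρ := paraboloid x₀ R x₁ with hρ
  set M := ρ * s x₁ with hM
  have htouch : s ≤ᶠ[𝓝 x₁] M • fun x => (paraboloid x₀ R x)⁻¹ := by
    filter_upwards [hmax, paraboloid.continuous.continuousAt.eventually_const_lt hρ_pos]
      with x hle hx
    rwa [Pi.smul_apply, smul_eq_mul, ← div_eq_mul_inv, le_div_iff₀' hx]
  have hbarrier : ContDiffAt ℝ 2 (fun x => (paraboloid x₀ R x)⁻¹) x₁ :=
    paraboloid.contDiff.contDiffAt.inv hρ_pos.ne'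
  have hlap : s x₁ ^ 3 - s x₁ ≤ M * (8 * ‖x₁ - x₀‖ ^ 2 / ρ ^ 3 + 2 * n / ρ ^ 2) := by
    rw [← paraboloid.laplacian_inv hρ_pos.ne', ← smul_eq_mul, ← laplacian_smul M hbarrier]
    refine hsub.trans (laplacian_le_of_eventuallyLE hs (hbarrier.const_smul M) htouch ?_)
    rw [Pi.smul_apply, smul_eq_mul, ← hρ, hM, mul_comm ρ, mul_inv_cancel_right₀ hρ_pos.ne']
  have hscale : M * (8 * ‖x₁ - x₀‖ ^ 2 / ρ ^ 3 + 2 * n / ρ ^ 2) * ρ ^ 2 =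
      s x₁ * (8 * ‖x₁ - x₀‖ ^ 2 + 2 * n * ρ) := by
    rw [hM]
    field_simp
  refine le_of_mul_le_mul_left ?_ hs₁
  linarith [mul_le_mul_of_nonneg_right hlap (sq_nonneg ρ)]

lemma sq_mul_sq_sub_one_le_of_le_laplacian (hR : 0 < R)
    (hcont : ContinuousOn s (closedBall x₀ R)) (hdiff : ContDiffOn ℝ 2 s (ball x₀ R))
    (hsub : ∀ x ∈ ball x₀ R, s x ^ 3 - s x ≤ Δ s x) (h₀ : 0 < s x₀) :
    R ^ 2 * (s x₀ ^ 2 - 1) ≤ 8 + 2 * finrank ℝ E := by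
  obtain ⟨x₁, hx₁, hmax⟩ := paraboloid.exists_isMaxOn_pow_mul hR one_ne_zero hcont h₀
  simp only [pow_one] at hmax
  have hρ_pos : 0 < paraboloid x₀ R x₁ := paraboloid.pos hx₁
  have hmax₀ : R ^ 2 * s x₀ ≤ paraboloid x₀ R x₁ * s x₁ := by
    simpa only [Set.mem_ofPred_eq, paraboloid.center] using hmax (mem_closedBall_self hR.le)
  have hs₁ : 0 < s x₁ :=
    pos_of_mul_pos_right ((mul_pos (pow_pos hR 2) h₀).trans_le hmax₀) hρ_pos.le
  have hpoint := paraboloid_sq_mul_sq_sub_one_le_of_isLocalMax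
    (hdiff.contDiffAt (isOpen_ball.mem_nhds hx₁))
    (hmax.isLocalMax (closedBall_mem_nhds_of_mem hx₁)) hρ_pos hs₁ (hsub x₁ hx₁)
  set n : ℝ := (finrank ℝ E : ℝ)
  set ρ := paraboloid x₀ R x₁ with hρ
  have hn : 0 ≤ n := Nat.cast_nonneg _
  have hρ_le : ρ ≤ R ^ 2 := paraboloid.le_sq
  have hnorm : ‖x₁ - x₀‖ ^ 2 = R ^ 2 - ρ := by rw [hρ, paraboloid, sub_sub_cancel]
  refine le_of_mul_le_mul_left ?_ (pow_pos hR 2)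
  have hsq : (R ^ 2 * s x₀) ^ 2 ≤ R ^ 2 * (R ^ 2 + (8 + 2 * n)) := calc
    (R ^ 2 * s x₀) ^ 2 ≤ (ρ * s x₁) ^ 2 := pow_le_pow_left₀ (by positivity) hmax₀ 2
    _ = ρ ^ 2 * (s x₁ ^ 2 - 1) + ρ ^ 2 := by ring
    _ ≤ 8 * (R ^ 2 - ρ) + 2 * n * ρ + ρ ^ 2 := by rw [← hnorm]; gcongr
    _ ≤ 8 * R ^ 2 + 2 * (n * R ^ 2) + (R ^ 2) ^ 2 := by
      linarith [mul_le_mul_of_nonneg_left hρ_le hn, pow_le_pow_left₀ hρ_pos.le hρ_le 2]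
    _ = R ^ 2 * (R ^ 2 + (8 + 2 * n)) := by ring
  linarith

lemma le_paraboloid_sq_mul_sq_sub_one_of_isLocalMax (hs : ContDiffAt ℝ 2 s x₁)
    (hmax : IsLocalMax (fun x => paraboloid x₀ R x ^ 2 * (s x)⁻¹) x₁) (hs₁ : 0 < s x₁)
    (hsuper : Δ s x₁ ≤ s x₁ ^ 3 - s x₁) :
    8 * ‖x₁ - x₀‖ ^ 2 - 4 * finrank ℝ E * paraboloid x₀ R x₁ ≤
      paraboloid x₀ R x₁ ^ 2 * (s x₁ ^ 2 - 1) := by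
  set ρ := paraboloid x₀ R x₁
  set θ := ρ ^ 2 * (s x₁)⁻¹
  have hθ : 0 ≤ θ := by positivity
  have hθ_mul : θ * s x₁ = ρ ^ 2 := inv_mul_cancel_right₀ hs₁.ne' _
  have htouch : (fun x => paraboloid x₀ R x ^ 2) ≤ᶠ[𝓝 x₁] θ • s := by
    filter_upwards [hmax, hs.continuousAt.eventually_const_lt hs₁] with x hle hx
    rwa [Pi.smul_apply, smul_eq_mul, ← div_le_iff₀ hx, div_eq_mul_inv]
  calc 8 * ‖x₁ - x₀‖ ^ 2 - 4 * finrank ℝ E * ρ = Δ (fun x => paraboloid x₀ R x ^ 2) x₁ :=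
        paraboloid.laplacian_sq.symm
    _ ≤ Δ (θ • s) x₁ := laplacian_le_of_eventuallyLE (paraboloid.contDiff.pow 2).contDiffAt
        (hs.const_smul θ) htouch hθ_mul.symm
    _ = θ * Δ s x₁ := laplacian_smul θ hs
    _ ≤ θ * (s x₁ ^ 3 - s x₁) := mul_le_mul_of_nonneg_left hsuper hθ
    _ = ρ ^ 2 * (s x₁ ^ 2 - 1) := by rw [← hθ_mul]; ring

lemma two_mul_sq_mul_one_sub_sq_le_of_laplacian_le (hR : 0 < R)
    (hcont : ContinuousOn s (closedBall x₀ R)) (hdiff : ContDiffOn ℝ 2 s (ball x₀ R))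
    (hpos : ∀ x ∈ closedBall x₀ R, 0 < s x)
    (hsuper : ∀ x ∈ ball x₀ R, Δ s x ≤ s x ^ 3 - s x) :
    2 * R ^ 2 * (1 - s x₀ ^ 2) ≤ (finrank ℝ E + 2) ^ 2 := by
  have hcenter : x₀ ∈ closedBall x₀ R := mem_closedBall_self hR.le
  obtain ⟨x₁, hx₁, hmax⟩ := paraboloid.exists_isMaxOn_pow_mul hR two_ne_zero
    (hcont.inv₀ fun x hx => (hpos x hx).ne') (inv_pos.2 (hpos x₀ hcenter))
  have hρ_pos : 0 < paraboloid x₀ R x₁ := paraboloid.pos hx₁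
  have hs₁ : 0 < s x₁ := hpos x₁ (ball_subset_closedBall hx₁)
  have hpoint := le_paraboloid_sq_mul_sq_sub_one_of_isLocalMax
    (hdiff.contDiffAt (isOpen_ball.mem_nhds hx₁))
    (hmax.isLocalMax (closedBall_mem_nhds_of_mem hx₁)) hs₁ (hsuper x₁ hx₁)
  set n : ℝ := (finrank ℝ E : ℝ)
  set ρ := paraboloid x₀ R x₁ with hρ
  have hs₁_le : s x₁ ≤ s x₀ := by
    have hinv : (s x₀)⁻¹ ≤ (s x₁)⁻¹ := by
      refine le_of_mul_le_mul_left ?_ (pow_pos hR 4)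
      calc R ^ 4 * (s x₀)⁻¹ = paraboloid x₀ R x₀ ^ 2 * (s x₀)⁻¹ := by
            rw [paraboloid.center, ← pow_mul]
        _ ≤ ρ ^ 2 * (s x₁)⁻¹ := hmax hcenter
        _ ≤ (R ^ 2) ^ 2 * (s x₁)⁻¹ := by gcongr; exact paraboloid.le_sq
        _ = R ^ 4 * (s x₁)⁻¹ := by rw [← pow_mul]
    exact (inv_le_inv₀ (hpos x₀ hcenter) hs₁).1 hinv
  have hnorm : ‖x₁ - x₀‖ ^ 2 = R ^ 2 - ρ := by rw [hρ, paraboloid, sub_sub_cancel]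
  rw [hnorm] at hpoint
  -- `8 R² - ρ (4 n + 8) ≤ -(1 - s²) ρ²` is quadratic in `ρ`: complete the square.
  have hsq : 2 * ((2 * n + 4) * ρ) * (8 * R ^ 2) ≤ ((2 * n + 4) * ρ) ^ 2 + (8 * R ^ 2) ^ 2 :=
    two_mul_le_add_sq _ _
  have hx₁_le : 2 * R ^ 2 * (1 - s x₁ ^ 2) ≤ (n + 2) ^ 2 := by
    refine le_of_mul_le_mul_left ?_ (pow_pos hρ_pos 2)
    linarith [mul_le_mul_of_nonneg_left hpoint (sq_nonneg R)]
  refine le_trans ?_ hx₁_le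
  gcongr

lemma nonpos_of_forall_sq_mul_le {a C : ℝ} (h : ∀ R : ℝ, 0 < R → R ^ 2 * a ≤ C) : a ≤ 0 := by
  by_contra! ha
  have htends : Tendsto (fun R : ℝ => R ^ 2 * a) atTop atTop :=
    (tendsto_pow_atTop two_ne_zero).atTop_mul_const ha
  obtain ⟨R, hC, hR⟩ := ((htends.eventually_gt_atTop C).and (eventually_gt_atTop 0)).exists
  exact (h R hR).not_gt hC

lemma le_one_of_le_laplacian (hs : ContDiff ℝ 2 s) (hsub : ∀ x, s x ^ 3 - s x ≤ Δ s x) (x : E) :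
    s x ≤ 1 := by
  by_contra! hx
  have hsq : s x ^ 2 - 1 ≤ 0 := nonpos_of_forall_sq_mul_le fun R hR =>
    sq_mul_sq_sub_one_le_of_le_laplacian hR hs.continuous.continuousOn hs.contDiffOn
      (fun y _ => hsub y) (zero_lt_one.trans hx)
  exact (one_lt_pow₀ hx two_ne_zero).not_ge (sub_nonpos.1 hsq)

lemma one_le_of_laplacian_le (hs : ContDiff ℝ 2 s) (hpos : ∀ x, 0 < s x)
    (hsuper : ∀ x, Δ s x ≤ s x ^ 3 - s x) (x : E) : 1 ≤ s x := by
  have hsq : 2 * (1 - s x ^ 2) ≤ 0 := nonpos_of_forall_sq_mul_le fun R hR => by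
    rw [← mul_assoc, mul_comm (R ^ 2)]
    exact two_mul_sq_mul_one_sub_sq_le_of_laplacian_le hR hs.continuous.continuousOn hs.contDiffOn
      (fun y _ => hpos y) fun y _ => hsuper y
  exact (one_le_sq_iff₀ (hpos x).le).1 (by linarith)

end Liouville

section AllenCahn

variable {E : Type*} [NormedAddCommGroup E] [InnerProductSpace ℝ E] [FiniteDimensional ℝ E]

/-- Entire classical solutions of the Allen–Cahn equation `-Δw = w - w³` on a Euclidean space. -/
structure IsAllenCahnSolution (w : E → ℝ) : Prop where
  contDiff : ContDiff ℝ 2 w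
  neg_laplacian_eq : ∀ x, -Δ w x = w x - w x ^ 3

/-- Entire classical solutions of the system `(P_Λ)` on a Euclidean space; the coordinate-free
counterpart of `IsSolution`. -/
structure IsSystemSolution (Λ : ℝ) (u v : E → ℝ) : Prop where
  contDiff_left : ContDiff ℝ 2 u
  contDiff_right : ContDiff ℝ 2 v
  neg_laplacian_left_eq : ∀ x, -Δ u x = u x - u x ^ 3 - Λ * u x * v x ^ 2
  neg_laplacian_right_eq : ∀ x, -Δ v x = v x - v x ^ 3 - Λ * u x ^ 2 * v x

lemma isAllenCahnSolution_one : IsAllenCahnSolution (1 : E → ℝ) where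
  contDiff := contDiff_const
  neg_laplacian_eq x := by
    have h : Δ (1 : E → ℝ) = 0 := laplacian_const
    simp [h]

lemma IsAllenCahnSolution.eq_one_of_pos {s : E → ℝ} (hs : IsAllenCahnSolution s)
    (hpos : ∀ x, 0 < s x) : s = 1 := by
  have hlap (x : E) : Δ s x = s x ^ 3 - s x := by linarith [hs.neg_laplacian_eq x]
  funext x
  exact le_antisymm (le_one_of_le_laplacian hs.contDiff (fun y => (hlap y).ge) x)
    (one_le_of_laplacian_le hs.contDiff hpos (fun y => (hlap y).le) x)

lemma isSystemSolution_three_iff {u v : E → ℝ} :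
    IsSystemSolution 3 u v ↔ IsAllenCahnSolution (u + v) ∧ IsAllenCahnSolution (u - v) := by
  constructor
  · rintro ⟨hu, hv, hlap_u, hlap_v⟩
    refine ⟨⟨hu.add hv, fun x => ?_⟩, ⟨hu.sub hv, fun x => ?_⟩⟩
    · rw [hu.contDiffAt.laplacian_add hv.contDiffAt, Pi.add_apply]
      linear_combination hlap_u x + hlap_v x
    · rw [hu.contDiffAt.laplacian_sub hv.contDiffAt, Pi.sub_apply]
      linear_combination hlap_u x - hlap_v x
  · rintro ⟨⟨hs, hlap_s⟩, ⟨hd, hlap_d⟩⟩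
    have hu : ContDiff ℝ 2 u := by
      rw [show u = (1 / 2 : ℝ) • (u + v + (u - v)) by module]
      exact contDiff_const.smul (hs.add hd)
    have hv : ContDiff ℝ 2 v := by simpa using hs.sub hu
    simp only [hu.contDiffAt.laplacian_add hv.contDiffAt, Pi.add_apply] at hlap_s
    simp only [hu.contDiffAt.laplacian_sub hv.contDiffAt, Pi.sub_apply] at hlap_d
    refine ⟨hu, hv, fun x => ?_, fun x => ?_⟩
    · linear_combination (hlap_s x + hlap_d x) / 2
    · linear_combination (hlap_s x - hlap_d x) / 2

theorem stmt_19_general (u v : E → ℝ) : (IsSystemSolution 3 u v ∧ ∀ x, 0 < u x + v x) ↔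
    ∃ w : E → ℝ, IsAllenCahnSolution w ∧
      ∀ x, u x = (1 + w x) / 2 ∧ v x = (1 - w x) / 2 := by
  rw [isSystemSolution_three_iff]
  constructor
  · rintro ⟨⟨hsum, hdiff⟩, hpos⟩
    refine ⟨u - v, hdiff, fun x => ?_⟩
    have hone : u x + v x = 1 := congrFun (hsum.eq_one_of_pos hpos) x
    constructor <;> rw [Pi.sub_apply] <;> linarith
  · rintro ⟨w, hw, huv⟩
    have hsum : u + v = 1 := funext fun x => by
      rw [Pi.add_apply, Pi.one_apply, (huv x).1, (huv x).2]; ring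
    have hdiff : u - v = w := funext fun x => by
      rw [Pi.sub_apply, (huv x).1, (huv x).2]; ring
    refine ⟨⟨hsum ▸ isAllenCahnSolution_one, hdiff ▸ hw⟩, fun x => ?_⟩
    rw [← Pi.add_apply, hsum]
    exact one_pos

end AllenCahn

lemma lap_eq_laplacian {N : ℕ} {f : EuclideanSpace ℝ (Fin N) → ℝ} (hf : ContDiff ℝ 2 f) :
    lap N f = Δ f := by
  have hdiff : Differentiable ℝ (fderiv ℝ f) :=
    (hf.fderiv_right (m := 1) le_rfl).differentiable one_ne_zero
  funext x
  simp [lap, laplacian_eq_iteratedFDeriv_orthonormalBasis f (EuclideanSpace.basisFun (Fin N) ℝ),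
    iteratedFDeriv_two_apply, fderiv_clm_apply (hdiff x) (differentiableAt_const _)]

lemma isSolution_iff {N : ℕ} {Λ : ℝ} {u v : EuclideanSpace ℝ (Fin N) → ℝ} :
    IsSolution N Λ u v ↔ IsSystemSolution Λ u v := by
  constructor
  · rintro ⟨hu, hv, hlap_u, hlap_v⟩
    exact ⟨hu, hv, lap_eq_laplacian hu ▸ hlap_u, lap_eq_laplacian hv ▸ hlap_v⟩
  · rintro ⟨hu, hv, hlap_u, hlap_v⟩
    exact ⟨hu, hv, lap_eq_laplacian hu ▸ hlap_u, lap_eq_laplacian hv ▸ hlap_v⟩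

/-- Proposition 6.3: characterization of positive solutions of
the system with `Λ = 3` in terms of a single solution of the Allen–Cahn
equation with values in `(-1, 1)`. -/
theorem stmt_19 (N : ℕ)
    (u v : EuclideanSpace ℝ (Fin (N + 1)) → ℝ)
    (hu : ContDiff ℝ 2 u) (hv : ContDiff ℝ 2 v) :
    (IsSolution (N + 1) 3 u v ∧ (∀ x, 0 < u x) ∧ (∀ x, 0 < v x)) ↔
    ∃ w : EuclideanSpace ℝ (Fin (N + 1)) → ℝ,
      ContDiff ℝ 2 w ∧
      (∀ x, -lap (N + 1) w x = w x - (w x) ^ 3) ∧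
      (∀ x, -1 < w x ∧ w x < 1) ∧
      (∀ x, u x = (1 + w x) / 2 ∧ v x = (1 - w x) / 2) := by
  constructor
  · rintro ⟨hsol, hu_pos, hv_pos⟩
    obtain ⟨w, hw, huv⟩ :=
      (stmt_19_general u v).1 ⟨isSolution_iff.1 hsol, fun x => add_pos (hu_pos x) (hv_pos x)⟩
    refine ⟨w, hw.contDiff, lap_eq_laplacian hw.contDiff ▸ hw.neg_laplacian_eq, fun x => ?_, huv⟩
    constructor <;> linarith [huv x, hu_pos x, hv_pos x]
  · rintro ⟨w, hw, hlap, hw_lt, huv⟩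
    have hsol := (stmt_19_general u v).2 ⟨w, ⟨hw, lap_eq_laplacian hw ▸ hlap⟩, huv⟩
    refine ⟨isSolution_iff.2 hsol.1, fun x => ?_, fun x => ?_⟩ <;> linarith [huv x, hw_lt x]
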